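/- arXiv:2102.09736 — 3 statements merged into one kernel-verified Lean document; each statement's English description precedes it below -/
import Mathlib

section
/- Let x ∈ O(m,n) and y ∈ O(p,m). Define the composite x∘y ∈ ℤΔ([p],[n]) by bilinear extension of composition of operators, i.e. (x∘y)_γ = Σ_{(α,β) : α∘β = γ} x_α·y_β. Then x∘y ∈ O(p,n). Moreover, for every m the basis element δ_{id_{[m]}} (coefficient 1 at the identity map, 0 elsewhere) belongs to O(m,m). Hence the sets O(m,n) determine a subcategory of the free ℤ-linear category on Δ. -/
/-!
The key identity is `(x ∘ y)β = Σ_δ (yβ)_δ • xδ`, the sum running over all monotone `δ`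
(`act_zcomp`). Its coefficient at an injective `γ` is `Σ_δ (yβ)_δ · (xδ)_γ`. A term with `δ`
not injective vanishes, because no `α` satisfies `α ∘ δ = γ`; when `β`, `γ`, `δ` are injective, both
factors are nonnegative by the hypotheses on `y` and `x`. Condition (O1) holds because the
augmentation `Σ_α x_α` is multiplicative under composition.
-/


abbrev ZD (a b : ℕ) := (Fin a →o Fin b) →₀ ℤ

noncomputable def act {a b c : ℕ} (x : ZD b c) (β : Fin a →o Fin b) : ZD a c :=
  Finsupp.mapDomain (fun α => α.comp β) x

def face {m : ℕ} (i : Fin (m+1)) : Fin m →o Fin (m+1) :=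
  ⟨i.succAbove, (Fin.succAboveOrderEmb i).monotone⟩

def degen {m : ℕ} (i : Fin m) : Fin (m+1) →o Fin m :=
  ⟨i.predAbove, Fin.predAbove_right_monotone i⟩

def memO {a b : ℕ} (x : ZD a b) : Prop :=
  (x.sum fun _ c => c) = 1 ∧
    ∀ (p : ℕ) (β : Fin (p+1) →o Fin a) (γ : Fin (p+1) →o Fin b),
      Function.Injective ⇑β → Function.Injective ⇑γ → 0 ≤ act x β γ

/-- The witness operation `x ▽ₖ y`, for `x, y ∈ ℤΔ([m],[n])` and `1 ≤ k ≤ m`. -/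
noncomputable def fill {m b : ℕ} (k : ℕ) (h1 : 1 ≤ k) (h2 : k ≤ m)
    (x y : ZD (m+1) b) : ZD (m+2) b :=
  act x (degen ⟨k, by omega⟩)
    - act (act (act x (face ⟨k-1, by omega⟩)) (degen ⟨k-1, by omega⟩)) (degen ⟨k-1, by omega⟩)
    + act y (degen ⟨k-1, by omega⟩)

/-- The pasting operation `x ⋆ₖ y`. -/
noncomputable def paste {m b : ℕ} (k : ℕ) (h1 : 1 ≤ k) (h2 : k ≤ m)
    (x y : ZD (m+1) b) : ZD (m+1) b :=
  x - act (act x (face ⟨k-1, by omega⟩)) (degen ⟨k-1, by omega⟩) + y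

/-- `x` is degenerate at `k`, i.e. `x = y σₖ` for some `y` one dimension lower. -/
def isDegenAt {a b : ℕ} (x : ZD a b) (k : ℕ) : Prop :=
  ∃ (p : ℕ) (hp : a = p + 1) (hk : k < p) (y : ZD p b),
    x = hp ▸ act y (degen ⟨k, hk⟩)

def isDegen {a b : ℕ} (x : ZD a b) : Prop := ∃ k, isDegenAt x k

/-- The number of preimages of the top element `n` under `α`. -/
def npre {a n : ℕ} (α : Fin a →o Fin (n+1)) : ℕ :=
  (Finset.univ.filter fun i => α i = Fin.last n).card

/-- `x` lies in the simplicial subset `A`: all operators in the support of `x`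
have equally many preimages of the top element. -/
def inA {a n : ℕ} (x : ZD a (n+1)) : Prop :=
  ∀ α ∈ x.support, ∀ β ∈ x.support, npre α = npre β

/-- `r` is the rank of `x`: the least `i` such that some `α ∈ supp x` has `α i = n`. -/
def isRank {a n : ℕ} (x : ZD a (n+1)) (r : Fin a) : Prop :=
  IsLeast {i : Fin a | ∃ α ∈ x.support, α i = Fin.last n} r

/-- `x̌`: the part of `x` supported on operators with `α r < n`. -/
noncomputable def checkPart {a n : ℕ} (x : ZD a (n+1)) (r : Fin a) : ZD a (n+1) :=
  x.filter (fun α => ¬ (α r = Fin.last n))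

/-- `x̄`: the part of `x` supported on operators with `α r = n`. -/
noncomputable def barPart {a n : ℕ} (x : ZD a (n+1)) (r : Fin a) : ZD a (n+1) :=
  x.filter (fun α => α r = Fin.last n)

/-- `ℓ` is the level of `x` (with rank `r`). -/
def isLevel {a n : ℕ} (x : ZD a (n+1)) (r ℓ : Fin a) : Prop :=
  IsLeast {i : Fin a | ∀ α ∈ (checkPart x r).support, α i = α r} ℓ

/-- Condition (†): `x̄` is degenerate at `ℓ - 1`. -/
def dagger {a n : ℕ} (x : ZD a (n+1)) (r ℓ : Fin a) : Prop :=
  isDegenAt (barPart x r) ((ℓ : ℕ) - 1)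

/-- The corank of `x`: the greatest number of preimages of `n` among operators in `supp x`. -/
def corank {a n : ℕ} (x : ZD a (n+1)) : ℕ := x.support.sup npre

/-- `u = x̌ + (x̄ ∂ℓ) σ(ℓ-1)`. -/
noncomputable def uPart {m n : ℕ} (x : ZD (m+1) (n+1)) (r ℓ : Fin (m+1))
    (h1 : 1 ≤ (ℓ : ℕ)) : ZD (m+1) (n+1) :=
  checkPart x r
    + act (act (barPart x r) (face ℓ)) (degen ⟨(ℓ:ℕ)-1, by have := ℓ.isLt; omega⟩)

/-- `v = (x̌ ∂(ℓ-1)) σ(ℓ-1) + x̄`. -/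
noncomputable def vPart {m n : ℕ} (x : ZD (m+1) (n+1)) (r ℓ : Fin (m+1))
    (h1 : 1 ≤ (ℓ : ℕ)) : ZD (m+1) (n+1) :=
  act (act (checkPart x r) (face ⟨(ℓ:ℕ)-1, by have := ℓ.isLt; omega⟩))
      (degen ⟨(ℓ:ℕ)-1, by have := ℓ.isLt; omega⟩)
    + barPart x r

/-- The parent `w = x̌ σℓ + x̄ σ(ℓ-1)`. -/
noncomputable def parent {m n : ℕ} (x : ZD (m+1) (n+1)) (r ℓ : Fin (m+1)) :
    ZD (m+2) (n+1) :=
  act (checkPart x r) (degen ℓ)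
    + act (barPart x r) (degen ⟨(ℓ:ℕ)-1, by have := ℓ.isLt; omega⟩)

/-- Bilinear extension of composition: `(x ∘ y)_γ = Σ_{α∘β = γ} x_α · y_β`. -/
noncomputable def zcomp {p m n : ℕ} (x : ZD m n) (y : ZD p m) : ZD p n :=
  x.sum fun α c => c • Finsupp.mapDomain (fun β => α.comp β) y

theorem act_eq_sum {a b c : ℕ} (x : ZD b c) (β : Fin a →o Fin b) :
    act x β = x.sum fun α k => Finsupp.single (α.comp β) k := rfl

theorem act_apply_eq_sum {a b c : ℕ} (x : ZD b c) (β : Fin a →o Fin b) (γ : Fin a →o Fin c) :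
    act x β γ = x.sum fun α k => Finsupp.single (α.comp β) k γ := by
  rw [act_eq_sum, Finsupp.sum_apply]

theorem zcomp_eq_sum {p m n : ℕ} (x : ZD m n) (y : ZD p m) :
    zcomp x y = y.sum fun δ k => k • act x δ := by
  simp only [zcomp, act, Finsupp.mapDomain, Finsupp.smul_sum, Finsupp.smul_single, smul_eq_mul]
  rw [Finsupp.sum_comm]
  simp only [mul_comm]

theorem act_zcomp {q p m n : ℕ} (x : ZD m n) (y : ZD p m) (β : Fin q →o Fin p) :
    act (zcomp x y) β = (act y β).sum fun δ k => k • act x δ := by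
  rw [← zcomp_eq_sum]
  simp only [zcomp, act, Finsupp.sum, Finsupp.mapDomain_finsetSum, Finsupp.mapDomain_smul,
    ← Finsupp.mapDomain_comp]
  rfl

/-- If `α ∘ δ` is injective then so is `δ`, so injective operators do not occur in `xδ` for
noninjective `δ`. -/
theorem act_apply_eq_zero {a b c : ℕ} (x : ZD b c) (δ : Fin a →o Fin b) (γ : Fin a →o Fin c)
    (hγ : Function.Injective ⇑γ) (hδ : ¬ Function.Injective ⇑δ) : act x δ γ = 0 := by
  rw [act_apply_eq_sum]
  refine Finset.sum_eq_zero fun α _ => Finsupp.single_eq_of_ne ?_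
  rintro rfl
  exact hδ (Function.Injective.of_comp (f := ⇑α) (g := ⇑δ) hγ)

theorem zcomp_total {p m n : ℕ} (x : ZD m n) (y : ZD p m) :
    ((zcomp x y).sum fun _ c => c) = (x.sum fun _ c => c) * (y.sum fun _ c => c) := by
  rw [zcomp, Finsupp.sum_sum_index (fun _ => rfl) (fun _ _ _ => rfl), Finsupp.sum_mul]
  refine Finset.sum_congr rfl fun α _ => ?_
  beta_reduce
  rw [Finsupp.sum_smul_index (fun _ => rfl),
    Finsupp.sum_mapDomain_index (fun _ => mul_zero _) (fun _ _ _ => mul_add _ _ _),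
    Finsupp.mul_sum]

theorem memO_zcomp {p m n : ℕ} {x : ZD m n} {y : ZD p m} (hx : memO x) (hy : memO y) :
    memO (zcomp x y) := by
  refine ⟨by rw [zcomp_total, hx.1, hy.1, one_mul], fun q β γ hβ hγ => ?_⟩
  rw [act_zcomp, Finsupp.sum_apply]
  refine Finset.sum_nonneg fun δ _ => ?_
  beta_reduce
  rw [Finsupp.smul_apply, smul_eq_mul]
  by_cases hδ : Function.Injective ⇑δ
  · exact mul_nonneg (hy.2 q β δ hβ hδ) (hx.2 q δ γ hδ hγ)
  · rw [act_apply_eq_zero x δ γ hγ hδ, mul_zero]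

theorem memO_single {a b : ℕ} (α : Fin a →o Fin b) : memO (Finsupp.single α (1 : ℤ)) := by
  refine ⟨Finsupp.sum_single_index rfl, fun q β γ _ _ => ?_⟩
  rw [act, Finsupp.mapDomain_single, Finsupp.single_apply]
  split_ifs <;> norm_num

/-- The sets `O(m,n)` are closed under composition and contain the identities,
hence determine a subcategory of the free `ℤ`-linear category on `Δ`. -/
theorem stmt0 :
    (∀ (p m n : ℕ) (x : ZD (m+1) (n+1)) (y : ZD (p+1) (m+1)),
      memO x → memO y → memO (zcomp x y)) ∧
    (∀ m : ℕ, memO (Finsupp.single (OrderHom.id : Fin (m+1) →o Fin (m+1)) (1 : ℤ))) := by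
  exact ⟨fun _ _ _ _ _ hx hy => memO_zcomp hx hy, fun _ => memO_single _⟩
end

section
/- Let x ∈ O(m,n). Let ι₀ : [0] → [m] be the map picking out 0 and ι_m : [0] → [m] the map picking out m. Then xι₀ is the basis element δ at the map [0] → [n] with value min{α(0) : α ∈ supp(x)}, and xι_m is the basis element δ at the map [0] → [n] with value max{α(m) : α ∈ supp(x)}. -/
/-- The coefficient at `γ|S` of the restriction to `S` of `∑ α ∈ T, w α • α`. The prescribed values
are recorded by a function `γ` on all vertices, of which only the values on `S` matter. -/
def coeffOn {a b : ℕ} (T : Finset (Fin a →o Fin b)) (w : (Fin a →o Fin b) → ℤ)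
    (S : Finset (Fin a)) (γ : Fin a → Fin b) : ℤ :=
  ∑ α ∈ T with ∀ s ∈ S, α s = γ s, w α

lemma coeffOn_eq_zero {a b : ℕ} {T : Finset (Fin a →o Fin b)} {w : (Fin a →o Fin b) → ℤ}
    {S : Finset (Fin a)} {γ : Fin a → Fin b} (h : ∀ α ∈ T, ¬ ∀ s ∈ S, α s = γ s) :
    coeffOn T w S γ = 0 := by
  unfold coeffOn
  rw [Finset.filter_false_of_mem h, Finset.sum_empty]

lemma coeffOn_eq_zero_of_lt {a b : ℕ} {T : Finset (Fin a →o Fin b)}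
    {w : (Fin a →o Fin b) → ℤ} {S : Finset (Fin a)} {γ : Fin a → Fin b} {s t : Fin a}
    (hs : s ∈ S) (ht : t ∈ S) (hst : s ≤ t) (h : γ t < γ s) :
    coeffOn T w S γ = 0 := by
  refine coeffOn_eq_zero fun α _ hα => ?_
  have := α.monotone hst
  rw [hα s hs, hα t ht] at this
  exact absurd h (not_lt.mpr this)

/-- Forgetting the vertex `s` sums the coefficients over all values at `s`. -/
lemma sum_coeffOn_update {a b : ℕ} (T : Finset (Fin a →o Fin b)) (w : (Fin a →o Fin b) → ℤ)
    (S : Finset (Fin a)) (γ : Fin a → Fin b) {s : Fin a} (hs : s ∈ S) :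
    ∑ c, coeffOn T w S (Function.update γ s c) = coeffOn T w (S.erase s) γ := by
  unfold coeffOn
  rw [← Finset.sum_fiberwise (T.filter fun α => ∀ t ∈ S.erase s, α t = γ t) (fun α => α s) w]
  refine Finset.sum_congr rfl fun c _ => ?_
  rw [Finset.filter_filter]
  congr 1
  refine Finset.filter_congr fun α _ => ?_
  constructor
  · intro h
    refine ⟨fun t ht => ?_, by simpa using h s hs⟩
    have := h t (Finset.mem_of_mem_erase ht)
    rwa [Function.update_of_ne (Finset.ne_of_mem_erase ht)] at this
  · rintro ⟨h1, h2⟩ t ht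
    by_cases hts : t = s
    · subst hts; simpa using h2
    · rw [Function.update_of_ne hts]
      exact h1 t (Finset.mem_erase.mpr ⟨hts, ht⟩)

lemma sum_update_lt {a b : ℕ} (S : Finset (Fin a)) (γ : Fin a → Fin b) {s : Fin a} (hs : s ∈ S)
    {c : Fin b} (hc : c < γ s) :
    ∑ t ∈ S, (Function.update γ s c t : ℕ) < ∑ t ∈ S, (γ t : ℕ) := by
  refine Finset.sum_lt_sum (fun t _ => ?_) ⟨s, hs, by simpa using hc⟩
  by_cases hts : t = s
  · subst hts; simpa using hc.le
  · rw [Function.update_of_ne hts]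

/-- The core induction: total `0` and nonnegativity at strictly monotone maps force all restricted
coefficients to vanish. -/
lemma coeffOn_eq_zero_of_sum_eq_zero {a b : ℕ} (T : Finset (Fin a →o Fin b))
    (w : (Fin a →o Fin b) → ℤ) (h0 : ∑ α ∈ T, w α = 0)
    (hpos : ∀ (S : Finset (Fin a)) (γ : Fin a → Fin b), S.Nonempty →
      StrictMonoOn γ (S : Set (Fin a)) → 0 ≤ coeffOn T w S γ)
    (S : Finset (Fin a)) : ∀ γ, coeffOn T w S γ = 0 := by
  induction S using Finset.strongInduction with
  | H S ihS =>
  intro γ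
  induction hN : ∑ s ∈ S, (γ s : ℕ) using Nat.strong_induction_on generalizing γ with
  | _ N ihN =>
  subst hN
  rcases S.eq_empty_or_nonempty with rfl | hS
  · simpa [coeffOn] using h0
  have line : ∀ s ∈ S, ∑ c, coeffOn T w S (Function.update γ s c) = 0 := fun s hs => by
    rw [sum_coeffOn_update T w S γ hs]
    exact ihS _ (Finset.erase_ssubset hs) γ
  have small : ∀ s ∈ S, ∀ c, c < γ s → coeffOn T w S (Function.update γ s c) = 0 :=
    fun s hs c hc => ihN _ (sum_update_lt S γ hs hc) _ rfl
  by_cases hmono : StrictMonoOn γ (S : Set (Fin a))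
  · -- Vary the value at the largest vertex: increasing it keeps the map strictly monotone.
    obtain ⟨t, htS, hmax⟩ : ∃ t ∈ S, ∀ v ∈ S, v ≤ t := ⟨S.max' hS, S.max'_mem hS, S.le_max'⟩
    have nonneg : ∀ c ∈ Finset.univ, 0 ≤ coeffOn T w S (Function.update γ t c) := by
      intro c _
      rcases lt_or_ge c (γ t) with hc | hc
      · exact (small t htS c hc).ge
      · refine hpos S _ hS fun u hu v hv huv => ?_
        have hut : u ≠ t := (huv.trans_le (hmax v hv)).ne
        rw [Function.update_of_ne hut]
        by_cases hvt : v = t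
        · subst hvt
          rw [Function.update_self]
          exact (hmono hu hv huv).trans_le hc
        · rw [Function.update_of_ne hvt]
          exact hmono hu hv huv
    simpa using (Finset.sum_eq_zero_iff_of_nonneg nonneg).mp (line t htS) (γ t) (Finset.mem_univ _)
  · simp only [StrictMonoOn, not_forall] at hmono
    obtain ⟨s, hs, t, ht, hst, hlt⟩ := hmono
    rcases (not_lt.mp hlt).lt_or_eq with h | h
    · exact coeffOn_eq_zero_of_lt hs ht hst.le h
    · -- With `γ s = γ t`, a larger value at `s` would violate monotonicity.
      have := line s hs
      rw [Finset.sum_eq_single (γ s)] at this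
      · simpa using this
      · intro c _ hc
        rcases lt_or_gt_of_ne hc with hc | hc
        · exact small s hs c hc
        · refine coeffOn_eq_zero_of_lt hs ht hst.le ?_
          rw [Function.update_self, Function.update_of_ne hst.ne', h]
          exact hc
      · simp

lemma eq_zero_of_sum_eq_zero {a b : ℕ} (T : Finset (Fin a →o Fin b))
    (w : (Fin a →o Fin b) → ℤ) (h0 : ∑ α ∈ T, w α = 0)
    (hpos : ∀ (S : Finset (Fin a)) (γ : Fin a → Fin b), S.Nonempty →
      StrictMonoOn γ (S : Set (Fin a)) → 0 ≤ coeffOn T w S γ) :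
    ∀ α ∈ T, w α = 0 := by
  intro α hα
  have := coeffOn_eq_zero_of_sum_eq_zero T w h0 hpos Finset.univ α
  unfold coeffOn at this
  rwa [Finset.sum_eq_single_of_mem α (by simp [hα])] at this
  intro β hβ hne
  exact absurd (OrderHom.ext _ _ (funext fun s => (Finset.mem_filter.mp hβ).2 s (Finset.mem_univ s)))
    hne

lemma act_apply {a b c : ℕ} (x : ZD b c) (β : Fin a →o Fin b) (γ : Fin a →o Fin c) :
    act x β γ = ∑ α ∈ x.support with α.comp β = γ, x α := by
  classical
  unfold act Finsupp.mapDomain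
  rw [Finsupp.sum_apply, Finsupp.sum, Finset.sum_filter]
  exact Finset.sum_congr rfl fun α _ => Finsupp.single_apply

/-- Condition (O2), with the injection `β` replaced by its image `S`. -/
lemma memO.coeffOn_nonneg {a b : ℕ} {x : ZD a b} (hx : memO x) (S : Finset (Fin a))
    (γ : Fin a → Fin b) (hS : S.Nonempty) (hγ : StrictMonoOn γ (S : Set (Fin a))) :
    0 ≤ coeffOn x.support x S γ := by
  obtain ⟨p, hp⟩ : ∃ p, S.card = p + 1 := ⟨S.card - 1, by have := hS.card_pos; omega⟩
  let e := S.orderEmbOfFin hp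
  have hmem : ∀ i, e i ∈ S := fun i => S.orderEmbOfFin_mem hp i
  have hmono : StrictMono fun i => γ (e i) := fun i j hij =>
    hγ (hmem i) (hmem j) (e.strictMono hij)
  have := hx.2 p ⟨e, e.monotone⟩ ⟨fun i => γ (e i), hmono.monotone⟩ e.injective hmono.injective
  rw [act_apply] at this
  unfold coeffOn
  convert this using 2
  refine Finset.filter_congr fun α _ => ?_
  constructor
  · intro h
    ext i : 2
    exact h _ (hmem i)
  · intro h s hs
    have hs' : s ∈ Set.range e := by
      rw [Finset.range_orderEmbOfFin]; exact hs
    obtain ⟨i, rfl⟩ := hs'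
    exact DFunLike.congr_fun h i

/-- A vertex `x ι_k` is the basis element at `i` as soon as `i` is attained at `k` on the support,
and every operator in the support that takes the value `i` anywhere takes it at `k`. -/
lemma act_vertex {m n : ℕ} {x : ZD (m+1) (n+1)} (hx : memO x) (k : Fin (m+1)) (i : Fin (n+1))
    (hatt : ∃ α ∈ x.support, α k = i)
    (hext : ∀ α ∈ x.support, ∀ s, α s = i → α k = i) :
    act x (⟨fun _ => k, monotone_const⟩ : Fin 1 →o Fin (m+1))
      = Finsupp.single ⟨fun _ => i, monotone_const⟩ 1 := by
  classical
  let f : Fin (n+1) → ℤ := fun c => ∑ α ∈ x.support with α k = c, x α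
  have hf0 : ∀ c, 0 ≤ f c := fun c => by
    have := hx.coeffOn_nonneg {k} (fun _ => c) (by simp) (by simp)
    simpa [coeffOn] using this
  have hf1 : ∑ c, f c = 1 := by
    rw [Finset.sum_fiberwise x.support (fun α => α k) x]
    exact hx.1
  have hfi : f i ≠ 0 := by
    intro h0
    obtain ⟨α, hα, hαk⟩ := hatt
    refine Finsupp.mem_support_iff.mp hα
      (eq_zero_of_sum_eq_zero _ _ h0 ?_ α (Finset.mem_filter.mpr ⟨hα, hαk⟩))
    intro S γ hS hγ
    by_cases hi : ∃ s ∈ S, γ s = i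
    · obtain ⟨s, hs, hsi⟩ := hi
      convert hx.coeffOn_nonneg S γ hS hγ using 1
      unfold coeffOn
      rw [Finset.filter_filter]
      congr 1
      refine Finset.filter_congr fun β hβ => ⟨fun h => h.2, fun h => ⟨?_, h⟩⟩
      exact hext β hβ s ((h s hs).trans hsi)
    · push Not at hi
      by_cases hne : ∃ β ∈ x.support, β k = i ∧ ∀ s ∈ S, β s = γ s
      · obtain ⟨β, hβ, hβk, hβS⟩ := hne
        have hkS : k ∉ S := fun hk => hi k hk ((hβS k hk).symm.trans hβk)
        have hupd : ∀ δ : Fin (m+1) →o Fin (n+1),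
            (∀ s ∈ insert k S, δ s = Function.update γ k i s) ↔
              δ k = i ∧ ∀ s ∈ S, δ s = γ s := by
          intro δ
          rw [Finset.forall_mem_insert, Function.update_self]
          refine and_congr_right fun _ => forall₂_congr fun s hs => ?_
          rw [Function.update_of_ne (ne_of_mem_of_not_mem hs hkS)]
        have hβ' := (hupd β).mpr ⟨hβk, hβS⟩
        -- The prescribed values agree with the monotone map `β`, so injectivity suffices.
        have hstrict : StrictMonoOn (Function.update γ k i) ((insert k S : Finset _) : Set _) := by
          intro u hu v hv huv
          have hu' := hβ' u hu
          have hv' := hβ' v hv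
          refine lt_of_le_of_ne (hu' ▸ hv' ▸ β.monotone huv.le) ?_
          rw [← hu', ← hv']
          rcases Finset.mem_insert.mp hu with rfl | huS <;>
            rcases Finset.mem_insert.mp hv with rfl | hvS
          · exact absurd huv (lt_irrefl _)
          · rw [hβk, hβS v hvS]; exact (hi v hvS).symm
          · rw [hβk, hβS u huS]; exact hi u huS
          · rw [hβS u huS, hβS v hvS]; exact (hγ huS hvS huv).ne
        convert hx.coeffOn_nonneg (insert k S) _ (Finset.insert_nonempty _ _) hstrict using 1
        unfold coeffOn
        rw [Finset.filter_filter]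
        congr 1
        exact Finset.filter_congr fun δ _ => (hupd δ).symm
      · refine (coeffOn_eq_zero fun β hβ h => hne ?_).ge
        exact ⟨β, (Finset.mem_filter.mp hβ).1, (Finset.mem_filter.mp hβ).2, h⟩
  have hsplit := Finset.add_sum_erase Finset.univ f (Finset.mem_univ i)
  have hrest : 0 ≤ ∑ c ∈ Finset.univ.erase i, f c := Finset.sum_nonneg fun c _ => hf0 c
  have hi1 : f i = 1 := by have := hf0 i; omega
  have hz : ∀ c, c ≠ i → f c = 0 := fun c hc =>
    (Finset.sum_eq_zero_iff_of_nonneg fun c _ => hf0 c).mp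
      (show ∑ c ∈ Finset.univ.erase i, f c = 0 by omega) c (by simp [hc])
  ext γ
  have hact : act x (⟨fun _ => k, monotone_const⟩ : Fin 1 →o Fin (m+1)) γ = f (γ 0) := by
    rw [act_apply]
    congr 1
    refine Finset.filter_congr fun α _ => ⟨fun h => DFunLike.congr_fun h 0, fun h => ?_⟩
    ext j : 2
    rw [Subsingleton.elim j 0]
    exact h
  rw [hact, Finsupp.single_apply]
  split_ifs with h
  · rw [← h]; exact hi1
  · refine hz _ fun heq => h ?_
    ext j : 2
    rw [Subsingleton.elim j 0]
    exact heq.symm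

/-- For `x ∈ O(m,n)`, the vertex `x(0)` is the basis element at the minimum of
`{α(0) : α ∈ supp x}` and the vertex `x(m)` is the basis element at the maximum of
`{α(m) : α ∈ supp x}`. -/
theorem stmt4 (m n : ℕ) (x : ZD (m+1) (n+1)) (hx : memO x) :
    act x (⟨fun _ => 0, monotone_const⟩ : Fin 1 →o Fin (m+1))
      = Finsupp.single ⟨fun _ => x.support.inf (fun α => α 0), monotone_const⟩ 1 ∧
    act x (⟨fun _ => Fin.last m, monotone_const⟩ : Fin 1 →o Fin (m+1))
      = Finsupp.single ⟨fun _ => x.support.sup (fun α => α (Fin.last m)), monotone_const⟩ 1 := by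
  have hne : x.support.Nonempty := by
    rw [Finset.nonempty_iff_ne_empty]
    intro h
    have := hx.1
    rw [Finsupp.sum, h, Finset.sum_empty] at this
    exact zero_ne_one this
  constructor
  · refine act_vertex hx 0 _ ?_ fun α hα s hs => ?_
    · obtain ⟨α, hα, h⟩ := Finset.exists_mem_eq_inf x.support hne (fun α => α 0)
      exact ⟨α, hα, h.symm⟩
    · exact le_antisymm (hs ▸ α.monotone (Fin.zero_le s))
        (Finset.inf_le (f := fun α : Fin (m+1) →o Fin (n+1) => α 0) hα)
  · refine act_vertex hx (Fin.last m) _ ?_ fun α hα s hs => ?_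
    · obtain ⟨α, hα, h⟩ := Finset.exists_mem_eq_sup x.support hne (fun α => α (Fin.last m))
      exact ⟨α, hα, h.symm⟩
    · exact le_antisymm
        (Finset.le_sup (f := fun α : Fin (m+1) →o Fin (n+1) => α (Fin.last m)) hα)
        (hs ▸ α.monotone (Fin.le_last s))
end

section
/- Let x, y ∈ ℤΔ([m],[n]) with m ≥ 1 and 1 ≤ k ≤ m, and suppose x∂_{k−1} = y∂_k. Then (x▽_k y)∂_{k−1} = y, (x▽_k y)∂_k = x⋆_k y, and (x▽_k y)∂_{k+1} = x. -/
lemma act_add {a b c : ℕ} (x y : ZD b c) (β : Fin a →o Fin b) :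
    act (x + y) β = act x β + act y β :=
  Finsupp.mapDomain_add

lemma act_sub {a b c : ℕ} (x y : ZD b c) (β : Fin a →o Fin b) :
    act (x - y) β = act x β - act y β :=
  map_sub (Finsupp.mapDomain.addMonoidHom (M := ℤ)
    (fun α : Fin b →o Fin c => α.comp β)) x y

lemma act_act {a b c d : ℕ} (x : ZD c d) (β : Fin b →o Fin c) (γ : Fin a →o Fin b) :
    act (act x β) γ = act x (β.comp γ) := by
  unfold act
  rw [← Finsupp.mapDomain_comp]
  rfl

lemma act_id {a b : ℕ} (x : ZD a b) : act x OrderHom.id = x :=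
  Finsupp.mapDomain_id

lemma face_val {m : ℕ} (i : Fin (m+1)) (j : Fin m) :
    (face i j : ℕ) = if (j : ℕ) < i then (j : ℕ) else j + 1 := by
  change ((i.succAbove j : Fin (m+1)) : ℕ) = _
  simp only [Fin.succAbove, Fin.lt_def, Fin.val_castSucc]
  split_ifs <;> simp

lemma degen_val {m : ℕ} (i : Fin m) (j : Fin (m+1)) :
    (degen i j : ℕ) = if (i : ℕ) < j then (j : ℕ) - 1 else j := by
  change ((i.predAbove j : Fin m) : ℕ) = _
  simp only [Fin.predAbove, Fin.lt_def, Fin.val_castSucc]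
  split_ifs <;> simp

lemma degen_comp_face_self {m : ℕ} (i : ℕ) (hi : i < m) (hi' : i < m + 1) :
    (degen (⟨i, hi⟩ : Fin m)).comp (face ⟨i, hi'⟩) = OrderHom.id := by
  ext j
  simp only [OrderHom.comp_coe, Function.comp_apply, degen_val, face_val, OrderHom.id_coe, id]
  split_ifs <;> omega

lemma degen_comp_face_succ {m : ℕ} (i l : ℕ) (hi : i < m) (hl : l < m + 1) (h : l = i + 1) :
    (degen (⟨i, hi⟩ : Fin m)).comp (face ⟨l, hl⟩) = OrderHom.id := by
  ext j
  simp only [OrderHom.comp_coe, Function.comp_apply, degen_val, face_val, OrderHom.id_coe, id]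
  split_ifs <;> omega

/-- The cosimplicial identity `σₖ ∂ₖ₋₁ = ∂ₖ₋₁ σₖ₋₁`, with `i = k - 1`. -/
lemma degen_comp_face_of_lt {m : ℕ} (i k : ℕ) (hk : k < m + 1) (hi : i < m) (h : k = i + 1) :
    (degen (⟨k, hk⟩ : Fin (m+1))).comp (face ⟨i, by omega⟩) =
      (face ⟨i, by omega⟩).comp (degen ⟨i, hi⟩) := by
  ext j
  simp only [OrderHom.comp_coe, Function.comp_apply, degen_val, face_val]
  split_ifs <;> omega

/-- The cosimplicial identity `σₖ₋₁ ∂ₖ₊₁ = ∂ₖ σₖ₋₁`, with `i = k - 1`. -/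
lemma degen_comp_face_of_gt {m : ℕ} (i k : ℕ) (hk : k < m + 1) (hi : i < m) (h : k = i + 1) :
    (degen (⟨i, by omega⟩ : Fin (m+1))).comp (face ⟨k+1, by omega⟩) =
      (face ⟨k, hk⟩).comp (degen ⟨i, hi⟩) := by
  ext j
  simp only [OrderHom.comp_coe, Function.comp_apply, degen_val, face_val]
  split_ifs <;> omega

/-- Proposition (filler basic): the faces of `x ▽ₖ y` are `y`, `x ⋆ₖ y` and `x`. -/
theorem stmt5 (m n : ℕ) (x y : ZD (m+1) (n+1)) (k : ℕ) (h1 : 1 ≤ k) (h2 : k ≤ m)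
    (hxy : act x (face ⟨k-1, by omega⟩) = act y (face ⟨k, by omega⟩)) :
    act (fill k h1 h2 x y) (face ⟨k-1, by omega⟩) = y ∧
    act (fill k h1 h2 x y) (face ⟨k, by omega⟩) = paste k h1 h2 x y ∧
    act (fill k h1 h2 x y) (face ⟨k+1, by omega⟩) = x := by
  have hk : k = (k - 1) + 1 := by omega
  have hm : k - 1 < m := by omega
  refine ⟨?_, ?_, ?_⟩
  · unfold fill
    rw [act_add, act_sub, act_act x, degen_comp_face_of_lt (k-1) k (by omega) hm hk,
      act_act _ (degen _) (face _), degen_comp_face_self, act_id,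
      act_act y, degen_comp_face_self, act_id, ← act_act x, sub_self, zero_add]
  · unfold fill paste
    rw [act_add, act_sub, act_act x (degen _), degen_comp_face_self, act_id,
      act_act _ (degen _) (face _), degen_comp_face_succ _ _ _ _ hk, act_id,
      act_act y, degen_comp_face_succ _ _ _ _ hk, act_id]
  · unfold fill
    rw [act_add, act_sub, act_act x (degen _), degen_comp_face_succ _ _ _ _ rfl, act_id,
      act_act _ (degen _) (face _), degen_comp_face_of_gt (k-1) k (by omega) hm hk,
      ← act_act _ (face _), act_act _ (degen _) (face _),
      degen_comp_face_succ _ _ _ _ hk, act_id,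
      act_act y, degen_comp_face_of_gt (k-1) k (by omega) hm hk, ← act_act y, ← hxy,
      sub_add_cancel]
end
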